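/- arXiv:1305.1885 — 3 statements merged into one kernel-verified Lean document; each statement's English description precedes it below -/
import Mathlib

section
/- Let G be a finite simple graph, let B be any real matrix whose columns are indexed by the vertices of G and which satisfies BᵀB = L(G), and let S be an independent set of vertices of G each of which has at least one neighbor in G. Then the columns of B indexed by the vertices in S are linearly independent; equivalently, the submatrix of B formed by these columns has full column rank. -/
open Matrix
/-- Let `B` be any real matrix whose columns are indexed by the
vertices of a finite simple graph `G` and which satisfies `Bᵀ B = L(G)`, and let
`S` be an independent set of vertices of `G`, each having at least one neighbor.
Then the columns of `B` indexed by the vertices in `S` are linearly independent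
(equivalently, the corresponding submatrix of `B` has full column rank). -/
theorem columns_linearIndependent_of_transpose_mul_self_eq_lapMatrix
    {V ι : Type*} [Fintype V] [DecidableEq V] [Fintype ι]
    (G : SimpleGraph V) [DecidableRel G.Adj]
    (B : Matrix ι V ℝ) (hB : Bᵀ * B = G.lapMatrix ℝ)
    (S : Finset V) (hS : ∀ u ∈ S, ∀ v ∈ S, ¬ G.Adj u v)
    (hdeg : ∀ v ∈ S, 0 < G.degree v) :
    LinearIndependent ℝ (fun v : S => Bᵀ (v : V)) := by
  rw [Fintype.linearIndependent_iff]
  intro g hg w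
  have hL : ∀ v : S, (Bᵀ (w : V)) ⬝ᵥ (Bᵀ (v : V)) = if v = w then (G.degree (w : V) : ℝ) else 0 := by
    intro v
    have h1 : (Bᵀ (w : V)) ⬝ᵥ (Bᵀ (v : V)) = G.lapMatrix ℝ w v := by
      rw [← hB]; rfl
    rw [h1]
    have hn := hS w w.2 v v.2
    by_cases h : v = w
    · subst h
      simp [SimpleGraph.lapMatrix, SimpleGraph.degMatrix]
    · have h' : (w : V) ≠ v := fun e => h (Subtype.ext e.symm)
      simp [SimpleGraph.lapMatrix, SimpleGraph.degMatrix, h, h', hn]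
  have h2 := congrArg (fun x => (Bᵀ (w : V)) ⬝ᵥ x) hg
  simp only [dotProduct_sum, dotProduct_smul, hL, dotProduct_zero] at h2
  have h3 : (G.degree (w : V) : ℝ) ≠ 0 := by
    exact_mod_cast (hdeg w w.2).ne'
  simp only [smul_eq_mul, mul_ite, mul_zero, Finset.sum_ite_eq', Finset.mem_univ, if_true] at h2
  exact (mul_eq_zero.mp h2).resolve_right h3
end

section
/- Let H be a finite simple graph equipped with an orientation and oriented incidence matrix M, let S be an independent set of vertices of H, let λ be a real vector indexed by the edges of H, let ρ ∈ ℝ, and let x, z be real vectors indexed by the vertices of H with x_v = 0 for all v ∉ S and z_v = 0 for all v ∈ S. Then λᵀM(x + z) + (ρ/2)‖M(x + z)‖² = Σ_{v∈S} [ (Σ_{e : v is an endpoint of e} σ(e,v) λ_e − ρ Σ_{u adjacent to v} z_u) · x_v + (ρ/2) deg(v) · x_v² ] + λᵀMz + (ρ/2)‖Mz‖², where σ(e,v) = 1 if v = head(e) and σ(e,v) = −1 if v = tail(e). In particular, as a function of the values (x_v)_{v∈S}, the left-hand side separates into a sum over v ∈ S of independent one-variable terms plus a quantity not depending on x; Lemma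 1 of the paper follows by applying this identity to each induced subgraph G_l with S the first color class. -/
open Matrix

theorem nbr_sum_aux {V : Type*} [Fintype V] [DecidableEq V]
    (H : SimpleGraph V) [DecidableRel H.Adj]
    (head tail : H.edgeSet → V)
    (horient : ∀ e : H.edgeSet, (e : Sym2 V) = s(head e, tail e)) (v : V) (g : V → ℝ) :
    ∑ u ∈ H.neighborFinset v, g u = ∑ e : H.edgeSet,
      ((if v = head e then g (tail e) else 0) + (if v = tail e then g (head e) else 0)) := by
  have hadj : ∀ e : H.edgeSet, H.Adj (head e) (tail e) := by
    intro e
    have h := e.2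
    rw [horient e] at h
    exact h
  have hne : ∀ e : H.edgeSet, head e ≠ tail e := fun e => (hadj e).ne
  rw [← Finset.sum_filter_add_sum_filter_not Finset.univ (fun e : H.edgeSet => v = head e ∨ v = tail e)]
  rw [Finset.sum_eq_zero (s := Finset.univ.filter (fun e : H.edgeSet => ¬ (v = head e ∨ v = tail e)))]
  · rw [add_zero]
    refine Finset.sum_bij (fun u hu => ⟨s(v, u), by simpa using hu⟩) ?_ ?_ ?_ ?_
    · intro u hu
      have h := horient ⟨s(v, u), by simpa using hu⟩
      simp only [Sym2.eq_iff] at h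
      simp only [Finset.mem_filter, Finset.mem_univ, true_and]
      tauto
    · intro a ha b hb h
      have h' := congrArg Subtype.val h
      simp only [Sym2.eq_iff] at h'
      grind
    · intro e he
      simp only [Finset.mem_filter, Finset.mem_univ, true_and] at he
      rcases he with h | h
      · refine ⟨tail e, by simpa [h] using hadj e, Subtype.ext ?_⟩
        rw [horient e]
        change s(v, tail e) = _
        rw [h]
      · refine ⟨head e, by simpa [h] using (hadj e).symm, Subtype.ext ?_⟩
        rw [horient e]
        change s(v, head e) = _
        rw [h, Sym2.eq_swap]
    · intro u hu
      have h := horient ⟨s(v, u), by simpa using hu⟩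
      have hn := hne ⟨s(v, u), by simpa using hu⟩
      simp only [Sym2.eq_iff] at h
      rcases h with ⟨h1, h2⟩ | ⟨h1, h2⟩
      · rw [← h1, ← h2] at hn ⊢
        simp [hn]
      · rw [← h1, ← h2] at hn ⊢
        simp [hn.symm]
  · intro e he
    simp only [Finset.mem_filter, Finset.mem_univ, true_and, not_or] at he
    simp [he.1, he.2]

theorem dbl_sum_aux {V : Type*} [Fintype V] [DecidableEq V]
    (H : SimpleGraph V) [DecidableRel H.Adj]
    (head tail : H.edgeSet → V)
    (horient : ∀ e : H.edgeSet, (e : Sym2 V) = s(head e, tail e)) (f : V → V → ℝ) :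
    ∑ v, ∑ u ∈ H.neighborFinset v, f v u = ∑ e : H.edgeSet,
      (f (head e) (tail e) + f (tail e) (head e)) := by
  simp_rw [fun v => nbr_sum_aux H head tail horient v (f v)]
  rw [Finset.sum_comm]
  refine Finset.sum_congr rfl fun e _ => ?_
  rw [Finset.sum_add_distrib]
  simp

/-- Let `H` be a finite simple graph with an orientation
`(head, tail)` and oriented incidence matrix `M`, let `S` be an independent set
of vertices of `H`, let `λ` be a real vector indexed by the edges, `ρ ∈ ℝ`, and
let `x, z` be vectors indexed by the vertices with `x` supported on `S` and `z`
vanishing on `S`.  Then, with `σ(e,v) = 1` if `v = head e`, `= -1` if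
`v = tail e`, and `= 0` if `v` is not an endpoint of `e`,

`λᵀM(x+z) + (ρ/2)‖M(x+z)‖²
  = Σ_{v∈S} [ (Σ_e σ(e,v) λ_e − ρ Σ_{u ~ v} z_u)·x_v + (ρ/2)·deg(v)·x_v² ]
      + λᵀMz + (ρ/2)‖Mz‖²`,

so that, as a function of `(x_v)_{v∈S}`, the left-hand side separates into a sum
of independent one-variable terms plus a quantity not depending on `x`. -/
theorem augLagrangian_separates_over_indepSet
    {V : Type*} [Fintype V] [DecidableEq V]
    (H : SimpleGraph V) [DecidableRel H.Adj]
    (head tail : H.edgeSet → V)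
    (horient : ∀ e : H.edgeSet, (e : Sym2 V) = s(head e, tail e))
    (M : Matrix H.edgeSet V ℝ)
    (hM : ∀ (e : H.edgeSet) (v : V),
      M e v = if v = head e then 1 else if v = tail e then -1 else 0)
    (S : Finset V) (hS : ∀ u ∈ S, ∀ v ∈ S, ¬ H.Adj u v)
    (lam : H.edgeSet → ℝ) (ρ : ℝ)
    (x z : V → ℝ) (hx : ∀ v, v ∉ S → x v = 0) (hz : ∀ v ∈ S, z v = 0) :
    lam ⬝ᵥ M.mulVec (x + z) + (ρ / 2) * ∑ e, (M.mulVec (x + z) e) ^ 2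
      = (∑ v ∈ S,
          (((∑ e : H.edgeSet,
              (if v = head e then (1 : ℝ) else if v = tail e then -1 else 0) * lam e)
            - ρ * ∑ u ∈ H.neighborFinset v, z u) * x v
            + (ρ / 2) * (H.degree v : ℝ) * x v ^ 2))
        + lam ⬝ᵥ M.mulVec z + (ρ / 2) * ∑ e, (M.mulVec z e) ^ 2 := by
  have hadj : ∀ e : H.edgeSet, H.Adj (head e) (tail e) := by
    intro e
    have h := e.2
    rw [horient e] at h
    exact h
  have hmul : ∀ (y : V → ℝ) (e : H.edgeSet), M.mulVec y e = y (head e) - y (tail e) := by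
    intro y e
    have hne := (hadj e).ne
    have : ∀ v, M e v * y v = (if v = head e then y v else 0) - (if v = tail e then y v else 0) := by
      intro v
      rw [hM]
      split_ifs with h1 h2
      · exact absurd (h1.symm.trans h2) hne
      all_goals simp
    simp [Matrix.mulVec, dotProduct, this, Finset.sum_sub_distrib]
  have hxz : ∀ v, x v * z v = 0 := by
    intro v
    by_cases h : v ∈ S
    · simp [hz v h]
    · simp [hx v h]
  have hxx : ∀ e : H.edgeSet, x (head e) * x (tail e) = 0 := by
    intro e
    by_cases h : head e ∈ S
    · have : tail e ∉ S := fun h' => hS _ h _ h' (hadj e)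
      simp [hx _ this]
    · simp [hx _ h]
  have hlin : lam ⬝ᵥ M.mulVec x = ∑ v, (∑ e : H.edgeSet,
      (if v = head e then (1 : ℝ) else if v = tail e then -1 else 0) * lam e) * x v := by
    simp only [Matrix.mulVec, dotProduct, Finset.mul_sum, Finset.sum_mul]
    rw [Finset.sum_comm]
    refine Finset.sum_congr rfl fun v _ => Finset.sum_congr rfl fun e _ => ?_
    rw [hM]; ring
  have hquad : ∑ e, (M.mulVec (x + z) e) ^ 2 =
      ∑ v, ((H.degree v : ℝ) * x v ^ 2 - 2 * (∑ u ∈ H.neighborFinset v, z u) * x v)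
        + ∑ e, (M.mulVec z e) ^ 2 := by
    have h1 : ∀ v, (H.degree v : ℝ) * x v ^ 2 - 2 * (∑ u ∈ H.neighborFinset v, z u) * x v
        = ∑ u ∈ H.neighborFinset v, (x v ^ 2 - 2 * z u * x v) := by
      intro v
      rw [Finset.sum_sub_distrib, Finset.mul_sum, Finset.sum_mul]
      simp
    rw [Finset.sum_congr rfl fun v _ => h1 v, dbl_sum_aux H head tail horient
      (fun v u => x v ^ 2 - 2 * z u * x v), ← Finset.sum_add_distrib]
    refine Finset.sum_congr rfl fun e _ => ?_
    rw [hmul, hmul]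
    simp only [Pi.add_apply]
    linear_combination 2 * hxz (head e) + 2 * hxz (tail e) - 2 * hxx e
  rw [Finset.sum_subset (Finset.subset_univ S) (by intro v _ hv; simp [hx v hv]),
    hquad, Matrix.mulVec_add, dotProduct_add, hlin, mul_add, Finset.mul_sum]
  have h2 : ∀ a b c d k : ℝ, ∀ F G K : V → ℝ, (∀ v, F v + G v = K v) →
      ∑ v, F v + b + (∑ v, G v + d) = ∑ v, K v + b + d := by
    intro a b c d k F G K h
    rw [← Finset.sum_congr rfl fun v _ => h v, Finset.sum_add_distrib]
    ring
  refine h2 0 _ 0 _ 0 _ _ _ fun v => ?_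
  ring
end

section
/- Assume that for each l ∈ {1,…,n} there is a vertex set V_l' with V_l ⊆ V_l' ⊆ V and an edge set E_l' ⊆ E whose edges have both endpoints in V_l', such that the graph (V_l', E_l ∪ E_l') is connected (for instance, V_l' and E_l' obtained by adjoining a Steiner tree of G whose required nodes are V_l). Then: (i) a family z = (z^{(p)})_{p∈V} of vectors in ℝⁿ satisfies z_l^{(i)} = z_l^{(j)} for every l and every edge (i,j) ∈ E_l ∪ E_l' if and only if there exists x ∈ ℝⁿ such that z_l^{(p)} = x_l for every l and every p ∈ V_l'; (ii) consequently, the infimum of Σ_{p=1}^P F_p(x) over x ∈ ℝⁿ equals the infimum of Σ_{p=1}^P F_p(z^{(p)}) over all families z satisfying the edge constraints in (i). (This is the equivalence of problems (2) and (12) of the paper for a non-connected variable after Steiner-tree augmentation.) -/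
noncomputable section

/-- For a component `l`, the graph on all nodes whose edge set is
`E_l ∪ E_l'`: the edges of `G` joining two nodes that both depend on
component `l`, together with the augmenting (Steiner) edges given by `H l`. -/
def augmentedGraph {P n : ℕ} (G : SimpleGraph (Fin P)) (S : Fin P → Finset (Fin n))
    (H : Fin n → SimpleGraph (Fin P)) (l : Fin n) : SimpleGraph (Fin P) where
  Adj i j := (G.Adj i j ∧ l ∈ S i ∧ l ∈ S j) ∨ (H l).Adj i j
  symm := by
    refine ⟨?_⟩
    intro i j hij
    rcases hij with ⟨h1, h2, h3⟩ | h
    · exact Or.inl ⟨h1.symm, h3, h2⟩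
    · exact Or.inr h.symm
  loopless := by
    refine ⟨?_⟩
    intro i hi
    rcases hi with ⟨h1, _⟩ | h
    · exact G.loopless.irrefl i h1
    · exact (H l).loopless.irrefl i h

/-- **equivalence of problems (2) and (12) after Steiner-tree
augmentation.**  Suppose that for each component `l` there are a vertex set
`V' l ⊇ V_l = {p : l ∈ S p}` and extra edges (the graph `H l`, a subgraph of
the communication graph `G` whose edges have both endpoints in `V' l`) such
that the graph with vertex set `V' l` and edge set `E_l ∪ E_l'` is connected.
Then (i) a family of local copies `z` satisfies the augmented edge consensus
constraints iff all copies of each component `l` agree with some global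
`x ∈ ℝⁿ` on `V' l`, and (ii) the infimum of `Σ_p F p x` over `x ∈ ℝⁿ` equals
the infimum of `Σ_p F p (z p)` over the families `z` satisfying those
constraints. -/
theorem consensus_reformulation_nonconnected
    {P n : ℕ} (G : SimpleGraph (Fin P)) [DecidableRel G.Adj]
    (hG : G.Connected)
    (S : Fin P → Finset (Fin n))
    (F : Fin P → (Fin n → ℝ) → EReal)
    (hdep : ∀ p, ∀ x y : Fin n → ℝ, (∀ l ∈ S p, x l = y l) → F p x = F p y)
    (hne : ∀ l : Fin n, ∃ p, l ∈ S p)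
    (V' : Fin n → Set (Fin P))
    (hsub : ∀ l : Fin n, {p | l ∈ S p} ⊆ V' l)
    (H : Fin n → SimpleGraph (Fin P))
    (hHsub : ∀ l, H l ≤ G)
    (hHend : ∀ (l : Fin n) (i j : Fin P), (H l).Adj i j → i ∈ V' l ∧ j ∈ V' l)
    (hconn : ∀ l : Fin n, ((augmentedGraph G S H l).induce (V' l)).Connected) :
    (∀ z : Fin P → Fin n → ℝ,
      ((∀ (l : Fin n) (i j : Fin P), (augmentedGraph G S H l).Adj i j → z i l = z j l)
        ↔ (∃ x : Fin n → ℝ, ∀ (l : Fin n) (p : Fin P), p ∈ V' l → z p l = x l)))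
    ∧ (⨅ x : Fin n → ℝ, ∑ p, F p x)
        = ⨅ z : {z : Fin P → Fin n → ℝ //
            ∀ (l : Fin n) (i j : Fin P), (augmentedGraph G S H l).Adj i j → z i l = z j l},
            ∑ p, F p (z.val p) := by
  have key : ∀ z : Fin P → Fin n → ℝ,
      ((∀ (l : Fin n) (i j : Fin P), (augmentedGraph G S H l).Adj i j → z i l = z j l)
        ↔ (∃ x : Fin n → ℝ, ∀ (l : Fin n) (p : Fin P), p ∈ V' l → z p l = x l)) := by
    intro z
    constructor
    · intro h
      choose q hq using hne
      refine ⟨fun l => z (q l) l, fun l p hp => ?_⟩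
      obtain ⟨w⟩ := (hconn l).preconnected ⟨p, hp⟩ ⟨q l, hsub l (hq l)⟩
      have walk : ∀ (a b : V' l), ((augmentedGraph G S H l).induce (V' l)).Walk a b →
          z a l = z b l := by
        intro a b w
        induction w with
        | nil => rfl
        | cons hadj _ ih => exact (h l _ _ hadj).trans ih
      exact walk _ _ w
    · rintro ⟨x, hx⟩ l i j hij
      have hm : i ∈ V' l ∧ j ∈ V' l := by
        rcases hij with ⟨_, h2, h3⟩ | h
        · exact ⟨hsub l h2, hsub l h3⟩
        · exact hHend l i j h
      rw [hx l i hm.1, hx l j hm.2]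
  refine ⟨key, le_antisymm ?_ ?_⟩
  · refine le_iInf fun z => ?_
    obtain ⟨x, hx⟩ := (key z.val).1 z.property
    refine (iInf_le _ x).trans (le_of_eq ?_)
    refine Finset.sum_congr rfl fun p _ => ?_
    exact hdep p _ _ fun l hl => (hx l p (hsub l hl)).symm
  · refine le_iInf fun x => ?_
    exact iInf_le (fun z : {z : Fin P → Fin n → ℝ //
            ∀ (l : Fin n) (i j : Fin P), (augmentedGraph G S H l).Adj i j → z i l = z j l} =>
            ∑ p, F p (z.val p)) ⟨fun _ => x, fun _ _ _ _ => rfl⟩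
end
end
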